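/- Let α > -1 and 0 < p < ∞ with p > α + 2. Then the norm of the point evaluation functional δ_z on the weighted Dirichlet space D^p_α is comparable to 1 uniformly in z: there exist constants c, C > 0 independent of z ∈ 𝔻 such that c ≤ sup{|f(z)| : f ∈ D^p_α, ‖f‖_{D^p_α} ≤ 1} ≤ C for all z ∈ 𝔻. -/

import Mathlib

open MeasureTheory Metric Set Filter Topology ENNReal

noncomputable section

/-- The open unit disk in ℂ. -/
def unitDisk : Set ℂ := Metric.ball (0 : ℂ) 1

/-- The normalized Lebesgue area measure `dA = (1/π) dx dy` on ℂ. -/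
def areaMeasure : Measure ℂ := (ENNReal.ofReal (Real.pi)⁻¹) • (volume : Measure ℂ)

/-- `∫_𝔻 |f'(z)|^p (1-|z|²)^α dA(z)`, as an extended nonnegative real. -/
def dirichletLintegral (p α : ℝ) (f : ℂ → ℂ) : ℝ≥0∞ :=
  ∫⁻ z in unitDisk, ENNReal.ofReal (‖deriv f z‖ ^ p * (1 - ‖z‖ ^ 2) ^ α) ∂areaMeasure

/-- Membership in the weighted Dirichlet space `D^p_α`: analytic on 𝔻 with finite norm. -/
def MemDirichlet (p α : ℝ) (f : ℂ → ℂ) : Prop :=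
  DifferentiableOn ℂ f unitDisk ∧ dirichletLintegral p α f < ⊤

/-- The norm of the weighted Dirichlet space `D^p_α`:
`(|f(0)|^p + ∫_𝔻 |f'(z)|^p (1-|z|²)^α dA(z))^{1/p}`. -/
def dirichletNorm (p α : ℝ) (f : ℂ → ℂ) : ℝ :=
  (‖f 0‖ ^ p + (dirichletLintegral p α f).toReal) ^ (1 / p)

/-!
Averaging `f'` over a disk of radius comparable to `1 - |w|`, on which the weight is comparable to
`(1 - |w|) ^ α`, the mean value property and Jensen's inequality give the growth estimate
`|f' w| ≤ K ‖f‖ (1 - |w|) ^ (-(α + 2) / p)`. In the supercritical range the exponent satisfies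
`(α + 2) / p < 1`, so this majorant of `f'` is integrable along every radius and `f` is bounded by a
multiple of its norm. The constant function `1` gives the lower bound.
-/

section MeanValue

variable {E : Type*} [NormedAddCommGroup E]

theorem volume_real_ball_complex (c : ℂ) {R : ℝ} (hR : 0 ≤ R) :
    volume.real (ball c R) = Real.pi * R ^ 2 := by
  simp [Measure.real, Complex.volume_ball, hR, mul_comm]

theorem circleMap_eq_add_polarCoord_symm (c : ℂ) (r θ : ℝ) :
    circleMap c r θ = c + Complex.polarCoord.symm (r, θ) := by
  rw [circleMap, Complex.polarCoord_symm_apply, Complex.exp_mul_I, Complex.ofReal_cos,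
    Complex.ofReal_sin]

theorem integrableOn_ball_of_continuousOn_closedBall {X : Type*} [PseudoMetricSpace X]
    [ProperSpace X] [MeasurableSpace X] [OpensMeasurableSpace X] {μ : Measure X}
    [IsFiniteMeasureOnCompacts μ] {f : X → E} {c : X} {R : ℝ}
    (hf : ContinuousOn f (closedBall c R)) : IntegrableOn f (ball c R) μ :=
  (hf.integrableOn_compact' (isCompact_closedBall c R) measurableSet_closedBall).mono_set
    ball_subset_closedBall

section Real

variable [NormedSpace ℝ E]

theorem circleAverage_eq_setIntegral_Ioo (f : ℂ → E) (c : ℂ) (r : ℝ) :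
    Real.circleAverage f c r =
      (2 * Real.pi)⁻¹ • ∫ θ in Ioo (-Real.pi) Real.pi, f (circleMap c r θ) := by
  rw [Real.circleAverage_eq_integral_add (-Real.pi),
    intervalIntegral.integral_comp_add_right (fun θ ↦ f (circleMap c r θ)), zero_add,
    two_mul, add_neg_cancel_right,
    intervalIntegral.integral_of_le (neg_le_self Real.pi_pos.le), integral_Ioc_eq_integral_Ioo]

theorem setIntegral_ball_eq_setIntegral_circleMap (f : ℂ → E) (c : ℂ) (R : ℝ) :
    ∫ z in ball c R, f z =
      ∫ x in Ioo 0 R ×ˢ Ioo (-Real.pi) Real.pi, x.1 • f (circleMap c x.1 x.2) := by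
  have hmem : ∀ x ∈ polarCoord.target, c + Complex.polarCoord.symm x ∈ ball c R ↔ x.1 < R := by
    intro x hx
    rw [mem_ball, dist_self_add_left, Complex.norm_polarCoord_symm, abs_of_pos hx.1]
  calc ∫ z in ball c R, f z = ∫ z, (ball c R).indicator f (c + z) := by
        rw [integral_add_left_eq_self, integral_indicator measurableSet_ball]
    _ = ∫ x in polarCoord.target,
          x.1 • (ball c R).indicator f (c + Complex.polarCoord.symm x) :=
        (Complex.integral_comp_polarCoord_symm fun z ↦ (ball c R).indicator f (c + z)).symm
    _ = ∫ x in Ioo 0 R ×ˢ Ioo (-Real.pi) Real.pi,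
          x.1 • (ball c R).indicator f (c + Complex.polarCoord.symm x) := by
        refine setIntegral_eq_of_subset_of_forall_sdiff_eq_zero
          polarCoord.open_target.measurableSet (prod_mono Ioo_subset_Ioi_self subset_rfl) ?_
        rintro x ⟨hx, hxR⟩
        rw [indicator_of_notMem, smul_zero]
        exact fun h ↦ hxR ⟨⟨hx.1, (hmem x hx).1 h⟩, hx.2⟩
    _ = ∫ x in Ioo 0 R ×ˢ Ioo (-Real.pi) Real.pi, x.1 • f (circleMap c x.1 x.2) := by
        refine setIntegral_congr_fun (measurableSet_Ioo.prod measurableSet_Ioo) fun x hx ↦ ?_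
        have hball := (hmem x ⟨hx.1.1, hx.2⟩).2 hx.1.2
        simp only [circleMap_eq_add_polarCoord_symm, indicator_of_mem hball]

theorem setIntegral_ball_eq_setIntegral_circleAverage {f : ℂ → E} {c : ℂ} {R : ℝ}
    (hf : ContinuousOn f (closedBall c R)) :
    ∫ z in ball c R, f z = ∫ r in Ioo 0 R, (2 * Real.pi * r) • Real.circleAverage f c r := by
  have hcont : ContinuousOn (fun x : ℝ × ℝ ↦ x.1 • f (circleMap c x.1 x.2))
      (Icc 0 R ×ˢ Icc (-Real.pi) Real.pi) := by
    refine continuousOn_fst.smul (hf.comp ?_ fun x hx ↦ ?_)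
    · unfold circleMap; fun_prop
    · rw [mem_closedBall, dist_eq_norm, circleMap_sub_center, norm_circleMap_zero,
        abs_of_nonneg hx.1.1]
      exact hx.1.2
  have hint : IntegrableOn (fun x : ℝ × ℝ ↦ x.1 • f (circleMap c x.1 x.2))
      (Ioo 0 R ×ˢ Ioo (-Real.pi) Real.pi) :=
    (hcont.integrableOn_compact (isCompact_Icc.prod isCompact_Icc)).mono_set
      (prod_mono Ioo_subset_Icc_self Ioo_subset_Icc_self)
  rw [setIntegral_ball_eq_setIntegral_circleMap, Measure.volume_eq_prod, setIntegral_prod _ hint]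
  refine setIntegral_congr_fun measurableSet_Ioo fun r _ ↦ ?_
  simp only [circleAverage_eq_setIntegral_Ioo]
  rw [integral_smul, smul_smul, mul_right_comm, mul_inv_cancel₀ (by positivity), one_mul]

theorem convexOn_norm_rpow {p : ℝ} (hp : 1 ≤ p) : ConvexOn ℝ univ fun x : E ↦ ‖x‖ ^ p := by
  refine ⟨convex_univ, fun x _ y _ a b ha hb hab ↦ ?_⟩
  calc ‖a • x + b • y‖ ^ p ≤ (a • ‖x‖ + b • ‖y‖) ^ p := by
        gcongr
        exact convexOn_univ_norm.2 (mem_univ x) (mem_univ y) ha hb hab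
    _ ≤ a • ‖x‖ ^ p + b • ‖y‖ ^ p :=
        (convexOn_rpow hp).2 (norm_nonneg x) (norm_nonneg y) ha hb hab

end Real

section Complex

variable [NormedSpace ℂ E] [CompleteSpace E] {f : ℂ → E} {c : ℂ} {R : ℝ}

theorem setAverage_ball_of_diffContOnCl (hR : 0 < R) (hf : DiffContOnCl ℂ f (ball c R)) :
    ⨍ z in ball c R, f z = f c := by
  have hmean : ∀ r ∈ Ioo 0 R, (2 * Real.pi * r) • Real.circleAverage f c r =
      (2 * Real.pi * r) • f c := by
    intro r hr
    rw [DiffContOnCl.circleAverage]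
    exact hf.mono (ball_subset_ball (by rw [abs_of_pos hr.1]; exact hr.2.le))
  have hradial : ∫ r in Ioo 0 R, 2 * Real.pi * r = Real.pi * R ^ 2 := by
    rw [← integral_Ioc_eq_integral_Ioo, ← intervalIntegral.integral_of_le hR.le,
      intervalIntegral.integral_const_mul, integral_id]
    ring
  rw [setAverage_eq, setIntegral_ball_eq_setIntegral_circleAverage hf.continuousOn_ball,
    setIntegral_congr_fun measurableSet_Ioo hmean, integral_smul_const, hradial,
    volume_real_ball_complex c hR.le, inv_smul_smul₀ (by positivity)]

theorem norm_rpow_le_setAverage_ball {p : ℝ} (hR : 0 < R) (hp : 1 ≤ p)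
    (hf : DiffContOnCl ℂ f (ball c R)) :
    ‖f c‖ ^ p ≤ ⨍ z in ball c R, ‖f z‖ ^ p := by
  have hnorm : Continuous fun x : E ↦ ‖x‖ ^ p :=
    continuous_norm.rpow_const fun _ ↦ Or.inr (by linarith)
  calc ‖f c‖ ^ p = ‖⨍ z in ball c R, f z‖ ^ p := by rw [setAverage_ball_of_diffContOnCl hR hf]
    _ ≤ ⨍ z in ball c R, ‖f z‖ ^ p := (convexOn_norm_rpow hp).map_set_average_le
        hnorm.continuousOn isClosed_univ (measure_ball_pos volume c hR).ne' measure_ball_lt_top.ne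
        (by simp) (integrableOn_ball_of_continuousOn_closedBall hf.continuousOn_ball)
        (integrableOn_ball_of_continuousOn_closedBall
          (hnorm.comp_continuousOn hf.continuousOn_ball))

end Complex

end MeanValue

section RadialGrowth

theorem hasDerivAt_one_sub_mul_rpow {a t γ : ℝ} (h : 1 - t * a ≠ 0) :
    HasDerivAt (fun t : ℝ ↦ (1 - t * a) ^ γ) (-(a * γ * (1 - t * a) ^ (γ - 1))) t := by
  have hline : HasDerivAt (fun t : ℝ ↦ 1 - t * a) (-a) t := by
    simpa using ((hasDerivAt_id t).mul_const a).const_sub 1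
  simpa only [neg_mul] using hline.rpow_const (p := γ) (Or.inl h)

variable {F : Type*} [NormedAddCommGroup F] [NormedSpace ℝ F]

theorem norm_sub_le_of_norm_deriv_le_rpow {g g' : ℝ → F} {a K β : ℝ} (ha : a < 1) (hK : 0 ≤ K)
    (hβ : β < 1) (hg : ∀ t ∈ Icc (0 : ℝ) 1, HasDerivAt g (g' t) t)
    (hg' : ∀ t ∈ Icc (0 : ℝ) 1, ‖g' t‖ ≤ K * (1 - t * a) ^ (-β) * a) :
    ‖g 1 - g 0‖ ≤ K / (1 - β) := by
  have hβ' : 0 < 1 - β := sub_pos.2 hβ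
  set B : ℝ → ℝ := fun t ↦ K / (1 - β) * (1 - (1 - t * a) ^ (1 - β))
  have hB : ∀ t ∈ Icc (0 : ℝ) 1, HasDerivAt B (K * (1 - t * a) ^ (-β) * a) t := fun t ht ↦ by
    have hpos : 1 - t * a ≠ 0 := by
      rcases ht.1.eq_or_lt with rfl | ht₀
      · simp
      · linarith [mul_lt_of_lt_one_right ht₀ ha, ht.2]
    refine (((hasDerivAt_one_sub_mul_rpow hpos).const_sub 1).const_mul
      (K / (1 - β))).congr_deriv ?_
    rw [show 1 - β - 1 = -β by ring]
    field_simp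
  calc ‖g 1 - g 0‖ ≤ B 1 :=
        image_norm_le_of_norm_deriv_right_le_deriv_boundary' (f := fun t ↦ g t - g 0)
          (fun t ht ↦ ((hg t ht).sub_const (g 0)).continuousAt.continuousWithinAt)
          (fun t ht ↦ ((hg t (Ico_subset_Icc_self ht)).sub_const (g 0)).hasDerivWithinAt)
          (by simp [B])
          (fun t ht ↦ (hB t ht).continuousAt.continuousWithinAt)
          (fun t ht ↦ (hB t (Ico_subset_Icc_self ht)).hasDerivWithinAt)
          (fun t ht ↦ hg' t (Ico_subset_Icc_self ht)) (right_mem_Icc.2 zero_le_one)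
    _ ≤ K / (1 - β) := by
        refine mul_le_of_le_one_right (by positivity) (sub_le_self _ (Real.rpow_nonneg ?_ _))
        linarith

theorem norm_sub_le_of_norm_fderiv_le_rpow {E : Type*} [NormedAddCommGroup E] [NormedSpace ℝ E]
    {f : E → F} {f' : E → E →L[ℝ] F} {K β : ℝ} (hβ : β < 1)
    (hf : ∀ x ∈ ball (0 : E) 1, HasFDerivAt f (f' x) x)
    (hf' : ∀ x ∈ ball (0 : E) 1, ‖f' x‖ ≤ K * (1 - ‖x‖) ^ (-β)) {x : E}
    (hx : x ∈ ball (0 : E) 1) : ‖f x - f 0‖ ≤ K / (1 - β) := by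
  have hx' : ‖x‖ < 1 := mem_ball_zero_iff.1 hx
  have hK : 0 ≤ K := by simpa using (norm_nonneg _).trans (hf' 0 (mem_ball_self one_pos))
  have hnorm : ∀ t ∈ Icc (0 : ℝ) 1, ‖t • x‖ = t * ‖x‖ := fun t ht ↦ norm_smul_of_nonneg ht.1 x
  have hball : ∀ t ∈ Icc (0 : ℝ) 1, t • x ∈ ball (0 : E) 1 := fun t ht ↦ by
    rw [mem_ball_zero_iff, hnorm t ht]
    exact (mul_le_of_le_one_left (norm_nonneg x) ht.2).trans_lt hx'
  have hpath : ∀ t ∈ Icc (0 : ℝ) 1,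
      HasDerivAt (fun t : ℝ ↦ f (t • x)) (f' (t • x) x) t := fun t ht ↦ by
    have hline : HasDerivAt (fun t : ℝ ↦ t • x) x t := by
      simpa using (hasDerivAt_id t).smul_const x
    exact (hf _ (hball t ht)).comp_hasDerivAt t hline
  have hbound : ∀ t ∈ Icc (0 : ℝ) 1, ‖f' (t • x) x‖ ≤ K * (1 - t * ‖x‖) ^ (-β) * ‖x‖ :=
    fun t ht ↦ by
      rw [← hnorm t ht]
      exact (f' (t • x)).le_of_opNorm_le (hf' _ (hball t ht)) x
  simpa only [one_smul, zero_smul] using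
    norm_sub_le_of_norm_deriv_le_rpow hx' hK hβ hpath hbound

end RadialGrowth

section Weight

theorem min_rpow_le_rpow {a b t : ℝ} (ha : 0 < a) (hat : a ≤ t) (htb : t ≤ b) (α : ℝ) :
    min (a ^ α) (b ^ α) ≤ t ^ α := by
  rcases le_total 0 α with hα | hα
  · exact min_le_of_left_le (Real.rpow_le_rpow ha.le hat hα)
  · exact min_le_of_right_le (Real.rpow_le_rpow_of_nonpos (ha.trans_le hat) htb hα)

theorem exists_mul_rpow_one_sub_norm_le {E : Type*} [SeminormedAddCommGroup E] (α : ℝ) :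
    ∃ c : ℝ, 0 < c ∧ ∀ w : E, ∀ z ∈ ball w ((1 - ‖w‖) / 2),
      c * (1 - ‖w‖) ^ α ≤ (1 - ‖z‖ ^ 2) ^ α := by
  refine ⟨min ((1 / 2) ^ α) (3 ^ α), by positivity, fun w z hz ↦ ?_⟩
  have hd : 0 < 1 - ‖w‖ := by linarith [pos_of_mem_ball hz]
  have hdist : |‖z‖ - ‖w‖| < (1 - ‖w‖) / 2 :=
    (abs_norm_sub_norm_le z w).trans_lt (mem_ball_iff_norm.1 hz)
  obtain ⟨hlow, hupp⟩ := abs_lt.1 hdist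
  have hlow' : 1 / 2 ≤ (1 - ‖z‖ ^ 2) / (1 - ‖w‖) := by
    rw [le_div_iff₀ hd]
    nlinarith [norm_nonneg z]
  have hupp' : (1 - ‖z‖ ^ 2) / (1 - ‖w‖) ≤ 3 := by
    rw [div_le_iff₀ hd]
    nlinarith [norm_nonneg z, norm_nonneg w]
  calc min ((1 / 2) ^ α) (3 ^ α) * (1 - ‖w‖) ^ α
      ≤ ((1 - ‖z‖ ^ 2) / (1 - ‖w‖)) ^ α * (1 - ‖w‖) ^ α := by
        gcongr
        exact min_rpow_le_rpow (by norm_num) hlow' hupp' α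
    _ = (1 - ‖z‖ ^ 2) ^ α := by
        rw [← Real.mul_rpow (by linarith) hd.le, div_mul_cancel₀ _ hd.ne']

end Weight

section Dirichlet

variable {p α : ℝ} {f : ℂ → ℂ}

/-- The integrand `|f'(z)|^p (1-|z|²)^α` of `dirichletLintegral`, as a real-valued function. -/
def dirichletDensity (p α : ℝ) (f : ℂ → ℂ) (z : ℂ) : ℝ :=
  ‖deriv f z‖ ^ p * (1 - ‖z‖ ^ 2) ^ α

theorem measurable_dirichletDensity (p α : ℝ) (f : ℂ → ℂ) :
    Measurable (dirichletDensity p α f) := by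
  unfold dirichletDensity
  have := measurable_deriv f
  fun_prop

theorem dirichletDensity_nonneg {z : ℂ} (hz : z ∈ unitDisk) : 0 ≤ dirichletDensity p α f z := by
  have hz' : ‖z‖ < 1 := mem_ball_zero_iff.1 hz
  have hweight : 0 ≤ 1 - ‖z‖ ^ 2 := by nlinarith [norm_nonneg z]
  exact mul_nonneg (by positivity) (Real.rpow_nonneg hweight α)

theorem ae_dirichletDensity_nonneg :
    0 ≤ᵐ[volume.restrict unitDisk] dirichletDensity p α f :=
  ae_restrict_of_forall_mem measurableSet_ball fun _ ↦ dirichletDensity_nonneg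

theorem setLIntegral_dirichletDensity (p α : ℝ) (f : ℂ → ℂ) :
    ∫⁻ z in unitDisk, ENNReal.ofReal (dirichletDensity p α f z) =
      ENNReal.ofReal Real.pi * dirichletLintegral p α f := by
  rw [dirichletLintegral, areaMeasure, Measure.restrict_smul, lintegral_smul_measure, smul_eq_mul,
    ← mul_assoc, ← ENNReal.ofReal_mul Real.pi_pos.le, mul_inv_cancel₀ Real.pi_ne_zero,
    ENNReal.ofReal_one, one_mul]
  rfl

theorem setIntegral_dirichletDensity (p α : ℝ) (f : ℂ → ℂ) :
    ∫ z in unitDisk, dirichletDensity p α f z =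
      Real.pi * (dirichletLintegral p α f).toReal := by
  rw [integral_eq_lintegral_of_nonneg_ae ae_dirichletDensity_nonneg
    (measurable_dirichletDensity p α f).aestronglyMeasurable, setLIntegral_dirichletDensity,
    ENNReal.toReal_mul, ENNReal.toReal_ofReal Real.pi_pos.le]

theorem integrableOn_dirichletDensity (hf : dirichletLintegral p α f ≠ ⊤) :
    IntegrableOn (dirichletDensity p α f) unitDisk := by
  refine (lintegral_ofReal_ne_top_iff_integrable
    (measurable_dirichletDensity p α f).aestronglyMeasurable ae_dirichletDensity_nonneg).1 ?_
  rw [setLIntegral_dirichletDensity]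
  exact ENNReal.mul_ne_top ENNReal.ofReal_ne_top hf

theorem dirichletNorm_nonneg : 0 ≤ dirichletNorm p α f := by
  unfold dirichletNorm
  positivity

theorem norm_apply_zero_le_dirichletNorm (hp : 0 < p) : ‖f 0‖ ≤ dirichletNorm p α f :=
  calc ‖f 0‖ = (‖f 0‖ ^ p) ^ (1 / p) := by
        rw [one_div, Real.rpow_rpow_inv (norm_nonneg _) hp.ne']
    _ ≤ dirichletNorm p α f := by
        unfold dirichletNorm
        gcongr
        exact le_add_of_nonneg_right ENNReal.toReal_nonneg

theorem toReal_dirichletLintegral_le_rpow_dirichletNorm (hp : 0 < p) :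
    (dirichletLintegral p α f).toReal ≤ dirichletNorm p α f ^ p := by
  rw [dirichletNorm, one_div, Real.rpow_inv_rpow (by positivity) hp.ne']
  exact le_add_of_nonneg_left (by positivity)

theorem dirichletLintegral_const (hp : p ≠ 0) (a : ℂ) :
    dirichletLintegral p α (fun _ ↦ a) = 0 := by
  simp [dirichletLintegral, Real.zero_rpow hp]

theorem memDirichlet_const (hp : p ≠ 0) (a : ℂ) : MemDirichlet p α (fun _ ↦ a) :=
  ⟨differentiableOn_const a, by simp [dirichletLintegral_const hp]⟩

theorem dirichletNorm_const (hp : p ≠ 0) (a : ℂ) : dirichletNorm p α (fun _ ↦ a) = ‖a‖ := by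
  rw [dirichletNorm, dirichletLintegral_const hp, ENNReal.toReal_zero, add_zero, one_div,
    Real.rpow_rpow_inv (norm_nonneg a) hp]

theorem mul_setIntegral_norm_deriv_rpow_le (hf : dirichletLintegral p α f ≠ ⊤) {s : Set ℂ}
    {m : ℝ} (hs : MeasurableSet s) (hsub : s ⊆ unitDisk) (hm : 0 ≤ m)
    (hweight : ∀ z ∈ s, m ≤ (1 - ‖z‖ ^ 2) ^ α) :
    m * ∫ z in s, ‖deriv f z‖ ^ p ≤ Real.pi * (dirichletLintegral p α f).toReal :=
  calc m * ∫ z in s, ‖deriv f z‖ ^ p = ∫ z in s, m * ‖deriv f z‖ ^ p :=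
        (integral_const_mul _ _).symm
    _ ≤ ∫ z in s, dirichletDensity p α f z := by
        refine integral_mono_of_nonneg (ae_of_all _ fun z ↦ by positivity)
          ((integrableOn_dirichletDensity hf).mono_set hsub)
          (ae_restrict_of_forall_mem hs fun z hz ↦ ?_)
        exact (mul_comm m _).trans_le (mul_le_mul_of_nonneg_left (hweight z hz) (by positivity))
    _ ≤ ∫ z in unitDisk, dirichletDensity p α f z :=
        setIntegral_mono_set (integrableOn_dirichletDensity hf) ae_dirichletDensity_nonneg
          hsub.eventuallyLE
    _ = Real.pi * (dirichletLintegral p α f).toReal := setIntegral_dirichletDensity p α f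

theorem exists_norm_deriv_rpow_le (hp : 1 ≤ p) (α : ℝ) :
    ∃ K : ℝ, 0 < K ∧ ∀ f : ℂ → ℂ, MemDirichlet p α f → ∀ w ∈ unitDisk,
      ‖deriv f w‖ ^ p ≤ K * (dirichletLintegral p α f).toReal * (1 - ‖w‖) ^ (-(α + 2)) := by
  obtain ⟨c, hc, hweight⟩ := exists_mul_rpow_one_sub_norm_le (E := ℂ) α
  refine ⟨4 / c, by positivity, fun f hf w hw ↦ ?_⟩
  have hd : 0 < 1 - ‖w‖ := sub_pos.2 (mem_ball_zero_iff.1 hw)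
  set d := 1 - ‖w‖
  have hclosed : closedBall w (d / 2) ⊆ unitDisk :=
    closedBall_subset_ball' (by
      rw [dist_zero_right]
      linarith [sub_add_cancel 1 ‖w‖, half_lt_self hd])
  calc ‖deriv f w‖ ^ p
      ≤ ⨍ z in ball w (d / 2), ‖deriv f z‖ ^ p :=
        norm_rpow_le_setAverage_ball (half_pos hd) hp
          ((hf.1.deriv isOpen_ball).diffContOnCl_ball hclosed)
    _ = (c * d ^ α * ∫ z in ball w (d / 2), ‖deriv f z‖ ^ p) /
          (c * d ^ α * (Real.pi * (d / 2) ^ 2)) := by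
        rw [setAverage_eq, volume_real_ball_complex w (half_pos hd).le, smul_eq_mul]
        field_simp
    _ ≤ (Real.pi * (dirichletLintegral p α f).toReal) /
          (c * d ^ α * (Real.pi * (d / 2) ^ 2)) := by
        refine div_le_div_of_nonneg_right ?_ (by positivity)
        exact mul_setIntegral_norm_deriv_rpow_le hf.2.ne measurableSet_ball
          (ball_subset_closedBall.trans hclosed) (by positivity) (hweight w)
    _ = 4 / c * (dirichletLintegral p α f).toReal * d ^ (-(α + 2)) := by
        rw [Real.rpow_neg hd.le, Real.rpow_add hd, Real.rpow_two]
        field_simp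
        ring

theorem exists_norm_deriv_le (hp : 1 ≤ p) (α : ℝ) :
    ∃ K : ℝ, 0 < K ∧ ∀ f : ℂ → ℂ, MemDirichlet p α f → ∀ w ∈ unitDisk,
      ‖deriv f w‖ ≤ K * dirichletNorm p α f * (1 - ‖w‖) ^ (-((α + 2) / p)) := by
  obtain ⟨K, hK, hbound⟩ := exists_norm_deriv_rpow_le hp α
  have hp₀ : 0 < p := one_pos.trans_le hp
  refine ⟨K ^ p⁻¹, by positivity, fun f hf w hw ↦ ?_⟩
  have hd : 0 ≤ 1 - ‖w‖ := sub_nonneg.2 (mem_ball_zero_iff.1 hw).le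
  have hN : 0 ≤ dirichletNorm p α f := dirichletNorm_nonneg
  refine (Real.rpow_le_rpow_iff (norm_nonneg _) (by positivity) hp₀).1 ?_
  calc ‖deriv f w‖ ^ p
      ≤ K * (dirichletLintegral p α f).toReal * (1 - ‖w‖) ^ (-(α + 2)) := hbound f hf w hw
    _ ≤ K * dirichletNorm p α f ^ p * (1 - ‖w‖) ^ (-(α + 2)) := by
        gcongr
        exact toReal_dirichletLintegral_le_rpow_dirichletNorm hp₀
    _ = (K ^ p⁻¹ * dirichletNorm p α f * (1 - ‖w‖) ^ (-((α + 2) / p))) ^ p := by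
        rw [Real.mul_rpow (by positivity) (by positivity), Real.mul_rpow (by positivity) hN,
          Real.rpow_inv_rpow hK.le hp₀.ne', ← Real.rpow_mul hd, neg_mul, div_mul_cancel₀ _ hp₀.ne']

theorem exists_norm_apply_le_mul_dirichletNorm (hp : 1 ≤ p) (hpα : α + 2 < p) :
    ∃ C : ℝ, 0 < C ∧ ∀ f : ℂ → ℂ, MemDirichlet p α f → ∀ z ∈ unitDisk,
      ‖f z‖ ≤ C * dirichletNorm p α f := by
  obtain ⟨K, hK, hderiv⟩ := exists_norm_deriv_le hp α
  have hp₀ : 0 < p := one_pos.trans_le hp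
  have hβ : (α + 2) / p < 1 := (div_lt_one hp₀).2 hpα
  have hβ' : 0 < 1 - (α + 2) / p := sub_pos.2 hβ
  refine ⟨1 + K / (1 - (α + 2) / p), add_pos one_pos (div_pos hK hβ'), fun f hf z hz ↦ ?_⟩
  have hfderiv : ∀ w ∈ unitDisk, HasFDerivAt f ((fderiv ℂ f w).restrictScalars ℝ) w :=
    fun w hw ↦ (hf.1.differentiableAt (isOpen_ball.mem_nhds hw)).hasFDerivAt.restrictScalars ℝ
  have hgrowth : ∀ w ∈ unitDisk, ‖(fderiv ℂ f w).restrictScalars ℝ‖ ≤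
      K * dirichletNorm p α f * (1 - ‖w‖) ^ (-((α + 2) / p)) := fun w hw ↦ by
    rw [ContinuousLinearMap.norm_restrictScalars, ← norm_deriv_eq_norm_fderiv]
    exact hderiv f hf w hw
  calc ‖f z‖ ≤ ‖f 0‖ + ‖f z - f 0‖ := norm_le_norm_add_norm_sub' _ _
    _ ≤ dirichletNorm p α f + K * dirichletNorm p α f / (1 - (α + 2) / p) :=
        add_le_add (norm_apply_zero_le_dirichletNorm hp₀)
          (norm_sub_le_of_norm_fderiv_le_rpow hβ hfderiv hgrowth hz)
    _ = (1 + K / (1 - (α + 2) / p)) * dirichletNorm p α f := by ring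

end Dirichlet

theorem pointEval_dirichlet_supercritical_general {p α : ℝ} (hp : 1 ≤ p) (hpα : α + 2 < p) :
    ∃ c C : ℝ, 0 < c ∧ 0 < C ∧ ∀ z ∈ unitDisk,
      c ≤ sSup {r : ℝ | ∃ f : ℂ → ℂ, MemDirichlet p α f ∧ dirichletNorm p α f ≤ 1 ∧ r = ‖f z‖} ∧
      sSup {r : ℝ | ∃ f : ℂ → ℂ, MemDirichlet p α f ∧ dirichletNorm p α f ≤ 1 ∧ r = ‖f z‖} ≤ C := by
  obtain ⟨C, hC, hbound⟩ := exists_norm_apply_le_mul_dirichletNorm hp hpα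
  have hp₀ : p ≠ 0 := (one_pos.trans_le hp).ne'
  refine ⟨1, C, one_pos, hC, fun z hz ↦ ?_⟩
  set S := {r : ℝ | ∃ f : ℂ → ℂ, MemDirichlet p α f ∧ dirichletNorm p α f ≤ 1 ∧ r = ‖f z‖}
  have hone : 1 ∈ S :=
    ⟨fun _ ↦ 1, memDirichlet_const hp₀ 1, by simp [dirichletNorm_const hp₀], by simp⟩
  have hupper : ∀ r ∈ S, r ≤ C := by
    rintro r ⟨f, hf, hnorm, rfl⟩
    exact (hbound f hf z hz).trans (mul_le_of_le_one_right hC.le hnorm)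
  exact ⟨le_csSup ⟨C, hupper⟩ hone, csSup_le ⟨1, hone⟩ hupper⟩

/-- Lemma 2.1(3): for `p > α + 2`, the point evaluation functional on `D^p_α` satisfies
`‖δ_z‖ ≍ 1` uniformly in `z`. -/
theorem pointEval_dirichlet_supercritical (p α : ℝ) (hα : -1 < α) (hp : 0 < p)
    (hpα : α + 2 < p) :
    ∃ c C : ℝ, 0 < c ∧ 0 < C ∧ ∀ z ∈ unitDisk,
      c ≤ sSup {r : ℝ | ∃ f : ℂ → ℂ, MemDirichlet p α f ∧ dirichletNorm p α f ≤ 1 ∧ r = ‖f z‖} ∧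
      sSup {r : ℝ | ∃ f : ℂ → ℂ, MemDirichlet p α f ∧ dirichletNorm p α f ≤ 1 ∧ r = ‖f z‖} ≤ C := by
  exact pointEval_dirichlet_supercritical_general (by linarith) hpα
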